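/- arXiv:1203.4863 — 2 statements merged into one kernel-verified Lean document; each statement's English description precedes it below -/
import Mathlib

section
/- Let G be a connected simple graph on a finite vertex set with maximum degree at most Δ (Δ ≥ 2) and diameter D ≥ 2. For a vertex v, let T(v) be the number of ordered pairs (x,z) of vertices with x ≠ v, z ≠ v and d(x,v) + d(v,z) = d(x,z) (i.e., v lies on some shortest path from x to z). Then for every vertex v, T(v) ≤ Δ²·(Δ−1)^(D−2)·D². -/
lemma exists_closer {V : Type*} (G : SimpleGraph V) (hG : G.Connected) (v x : V) (k : ℕ)
    (h : G.dist v x = k + 1) : ∃ u, G.Adj u x ∧ G.dist v u = k := by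
  obtain ⟨p, hp⟩ := hG.exists_walk_length_eq_dist x v
  rw [SimpleGraph.dist_comm, h] at hp
  cases p with
  | nil => simp at hp
  | @cons _ u _ hadj q =>
    refine ⟨u, hadj.symm, ?_⟩
    have h1 : G.dist u v ≤ q.length := SimpleGraph.dist_le q
    have h2 : G.dist v x ≤ G.dist v u + G.dist u x := hG.dist_triangle
    have h3 : G.dist u x = 1 := SimpleGraph.dist_eq_one_iff_adj.2 hadj.symm
    rw [SimpleGraph.dist_comm] at h1
    simp only [SimpleGraph.Walk.length_cons] at hp
    omega

lemma sphere_card {V : Type*} [Fintype V] [DecidableEq V]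
    (G : SimpleGraph V) [DecidableRel G.Adj] (hG : G.Connected)
    (Δ : ℕ) (hdeg : G.maxDegree ≤ Δ) (v : V) (k : ℕ) :
    (Finset.univ.filter fun x : V => G.dist v x = k + 1).card ≤ Δ * (Δ - 1) ^ k := by
  induction k with
  | zero =>
    have : (Finset.univ.filter fun x : V => G.dist v x = 0 + 1) = G.neighborFinset v := by
      ext x
      simp [SimpleGraph.dist_eq_one_iff_adj]
    rw [this, SimpleGraph.card_neighborFinset_eq_degree]
    simpa using (G.degree_le_maxDegree v).trans hdeg
  | succ k ih =>
    have hsub : (Finset.univ.filter fun x : V => G.dist v x = k + 1 + 1) ⊆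
        (Finset.univ.filter fun x : V => G.dist v x = k + 1).biUnion
          (fun u => (G.neighborFinset u).filter fun x => G.dist v x = k + 1 + 1) := by
      intro x hx
      simp only [Finset.mem_filter, Finset.mem_univ, true_and] at hx
      obtain ⟨u, hu, hd⟩ := exists_closer G hG v x _ hx
      simp only [Finset.mem_biUnion, Finset.mem_filter, Finset.mem_univ, true_and,
        SimpleGraph.mem_neighborFinset]
      exact ⟨u, hd, hu, hx⟩
    refine (Finset.card_le_card hsub).trans ((Finset.card_biUnion_le_card_mul _ _ (Δ - 1) ?_).trans ?_)
    · intro u hu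
      simp only [Finset.mem_filter, Finset.mem_univ, true_and] at hu
      obtain ⟨w, hw, hd⟩ := exists_closer G hG v u _ hu
      have hw' : w ∈ G.neighborFinset u := by
        rw [SimpleGraph.mem_neighborFinset]; exact hw.symm
      have : ((G.neighborFinset u).filter fun x => G.dist v x = k + 1 + 1) ⊆
          (G.neighborFinset u).erase w := by
        intro x hx
        rw [Finset.mem_filter] at hx
        rw [Finset.mem_erase]
        refine ⟨?_, hx.1⟩
        rintro rfl
        omega
      refine (Finset.card_le_card this).trans ?_
      rw [Finset.card_erase_of_mem hw', SimpleGraph.card_neighborFinset_eq_degree]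
      have := (G.degree_le_maxDegree u).trans hdeg
      omega
    · rw [pow_succ, ← mul_assoc]
      exact Nat.mul_le_mul_right _ ih


/-- **Vertex-flow bound for bounded-degree graphs (the paper's Lemma).** Let `G` be a finite
connected simple graph with maximum degree at most `Δ` (`Δ ≥ 2`) and diameter `D ≥ 2`.
For every vertex `v`, the number `T(v)` of ordered pairs `(x, z)` with `x ≠ v`, `z ≠ v` and
`d(x,v) + d(v,z) = d(x,z)` (i.e. `v` lies on some shortest path from `x` to `z`) satisfies
`T(v) ≤ Δ² * (Δ - 1)^(D - 2) * D²`. -/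
theorem flow_le_of_maxDegree_diam {V : Type*} [Fintype V] [DecidableEq V]
    (G : SimpleGraph V) [DecidableRel G.Adj] (hG : G.Connected)
    (Δ : ℕ) (hΔ : 2 ≤ Δ) (hdeg : G.maxDegree ≤ Δ)
    (D : ℕ) (hD2 : 2 ≤ D)
    (hD_le : ∀ x y : V, G.dist x y ≤ D) (hD_max : ∃ x y : V, G.dist x y = D) (v : V) :
    (Finset.univ.filter fun p : V × V =>
        p.1 ≠ v ∧ p.2 ≠ v ∧ G.dist p.1 v + G.dist v p.2 = G.dist p.1 p.2).card ≤
      Δ ^ 2 * (Δ - 1) ^ (D - 2) * D ^ 2 := by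

  have hsub : (Finset.univ.filter fun p : V × V =>
        p.1 ≠ v ∧ p.2 ≠ v ∧ G.dist p.1 v + G.dist v p.2 = G.dist p.1 p.2) ⊆
      (((Finset.range D) ×ˢ (Finset.range D)).filter fun q => q.1 + q.2 ≤ D - 2).biUnion
        (fun q => (Finset.univ.filter fun x : V => G.dist v x = q.1 + 1) ×ˢ
          (Finset.univ.filter fun x : V => G.dist v x = q.2 + 1)) := by
    rintro ⟨x, z⟩ h
    simp only [Finset.mem_filter, Finset.mem_univ, true_and] at h
    obtain ⟨hx, hz, h⟩ := h
    have h1 : 0 < G.dist v x := hG.pos_dist_of_ne hx.symm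
    have h2 : 0 < G.dist v z := hG.pos_dist_of_ne hz.symm
    have h3 := hD_le x z
    rw [SimpleGraph.dist_comm (u := x) (v := v)] at h
    simp only [Finset.mem_biUnion, Finset.mem_filter, Finset.mem_product, Finset.mem_range,
      Finset.mem_univ, true_and]
    refine ⟨(G.dist v x - 1, G.dist v z - 1), ?_, ?_⟩ <;> dsimp only <;> omega
  refine (Finset.card_le_card hsub).trans ((Finset.card_biUnion_le_card_mul _ _
    (Δ ^ 2 * (Δ - 1) ^ (D - 2)) ?_).trans ?_)
  · rintro ⟨i, j⟩ hq
    simp only [Finset.mem_filter] at hq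
    rw [Finset.card_product]
    calc _ ≤ (Δ * (Δ - 1) ^ i) * (Δ * (Δ - 1) ^ j) :=
          Nat.mul_le_mul (sphere_card G hG Δ hdeg v i) (sphere_card G hG Δ hdeg v j)
      _ = Δ ^ 2 * (Δ - 1) ^ (i + j) := by ring
      _ ≤ _ := Nat.mul_le_mul_left _ (Nat.pow_le_pow_right (by omega) hq.2)
  · rw [mul_comm]
    refine Nat.mul_le_mul_left _ ((Finset.card_filter_le _ _).trans ?_)
    simp [sq]
end

section
/- Let k ≥ 2 and C > 0 be real numbers and let G be a connected simple graph on N ≥ 3 vertices with maximum degree at most k and diameter D satisfying 2 ≤ D ≤ (log N)/(log k) + (log log N)/(log k) + C (natural logarithms). For a vertex v, let T(v) be the number of ordered pairs (x,z) of vertices with x ≠ v, z ≠ v and d(x,v) + d(v,z) = d(x,z). Then for every vertex v, T(v) ≤ k^C · N · (log N) · D². -/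
open Real

/-- Spheres grow at most geometrically. -/
theorem sphere_card_le {V : Type*} [Fintype V] [DecidableEq V]
    (G : SimpleGraph V) [DecidableRel G.Adj] (hG : G.Connected)
    (k : ℝ) (hk : 2 ≤ k) (hdeg : (G.maxDegree : ℝ) ≤ k) (v : V) (i : ℕ) :
    ((Finset.univ.filter fun x : V => G.dist v x = i).card : ℝ) ≤ k ^ i := by
  induction i with
  | zero =>
    have h : (Finset.univ.filter fun x : V => G.dist v x = 0) ⊆ {v} := by
      intro x hx
      simp only [Finset.mem_filter, Finset.mem_univ, true_and] at hx
      simp [(hG.dist_eq_zero_iff.mp hx).symm]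
    have := Finset.card_le_card h
    simp only [Finset.card_singleton] at this
    simpa using (by exact_mod_cast this :
      ((Finset.univ.filter fun x : V => G.dist v x = 0).card : ℝ) ≤ 1)
  | succ i ih =>
    have h : (Finset.univ.filter fun x : V => G.dist v x = i + 1) ⊆
        (Finset.univ.filter fun x : V => G.dist v x = i).biUnion
          (fun w => G.neighborFinset w) := by
      intro x hx
      simp only [Finset.mem_filter, Finset.mem_univ, true_and] at hx
      simp only [Finset.mem_biUnion, Finset.mem_filter, Finset.mem_univ, true_and,
        SimpleGraph.mem_neighborFinset]
      obtain ⟨p, hp⟩ := hG.exists_walk_length_eq_dist x v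
      rw [SimpleGraph.dist_comm, hx] at hp
      cases p with
      | nil => simp at hp
      | cons hadj q =>
        rename_i w
        refine ⟨w, ?_, hadj.symm⟩
        simp only [SimpleGraph.Walk.length_cons] at hp
        have h1 := SimpleGraph.dist_le q
        have h2 := hG.dist_triangle (u := v) (v := w) (w := x)
        have h3 : G.dist w x = 1 := SimpleGraph.dist_eq_one_iff_adj.mpr hadj.symm
        rw [SimpleGraph.dist_comm] at h1
        omega
    have h1 := (Finset.card_le_card h).trans
      (Finset.card_biUnion_le_card_mul _ _ G.maxDegree (fun w _ => by
        rw [SimpleGraph.card_neighborFinset_eq_degree]; exact G.degree_le_maxDegree w))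
    calc ((Finset.univ.filter fun x : V => G.dist v x = i + 1).card : ℝ)
        ≤ ((Finset.univ.filter fun x : V => G.dist v x = i).card : ℝ) * G.maxDegree := by
          exact_mod_cast h1
      _ ≤ k ^ i * k := by gcongr
      _ = k ^ (i + 1) := (pow_succ _ _).symm

/-- **Deterministic core of the random-matching congestion theorem.** Let `k ≥ 2` and `C > 0`
be reals and `G` a finite connected simple graph on `N ≥ 3` vertices with maximum degree at
most `k` and diameter `D` with `2 ≤ D ≤ log N / log k + log (log N) / log k + C` (natural
logarithms).  Then for every vertex `v`, the number `T(v)` of ordered pairs `(x, z)` with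
`x ≠ v`, `z ≠ v` and `d(x,v) + d(v,z) = d(x,z)` satisfies
`T(v) ≤ k ^ C * N * log N * D ^ 2`. -/
theorem flow_le_of_small_diam {V : Type*} [Fintype V] [DecidableEq V]
    (G : SimpleGraph V) [DecidableRel G.Adj] (hG : G.Connected)
    (k C : ℝ) (hk : 2 ≤ k) (hC : 0 < C)
    (N : ℕ) (hN : N = Fintype.card V) (hN3 : 3 ≤ N)
    (hdeg : (G.maxDegree : ℝ) ≤ k)
    (D : ℕ) (hD2 : 2 ≤ D)
    (hD_le : ∀ x y : V, G.dist x y ≤ D) (hD_max : ∃ x y : V, G.dist x y = D)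
    (hD : (D : ℝ) ≤ Real.log N / Real.log k + Real.log (Real.log N) / Real.log k + C)
    (v : V) :
    ((Finset.univ.filter fun p : V × V =>
        p.1 ≠ v ∧ p.2 ≠ v ∧ G.dist p.1 v + G.dist v p.2 = G.dist p.1 p.2).card : ℝ) ≤
      k ^ C * N * Real.log N * (D : ℝ) ^ 2 := by
  have hk0 : (0 : ℝ) < k := by linarith
  have hlk : 0 < Real.log k := Real.log_pos (by linarith)
  have hN1 : (1 : ℝ) < N := by exact_mod_cast (by omega : 1 < N)
  have hlN : 0 < Real.log N := Real.log_pos hN1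
  have hkD : k ^ D ≤ k ^ C * N * Real.log N := by
    rw [← Real.rpow_natCast]
    refine (Real.rpow_le_rpow_of_exponent_le (by linarith) hD).trans (le_of_eq ?_)
    have e : ∀ y : ℝ, 0 < y → k ^ (Real.log y / Real.log k) = y := by
      intro y hy
      rw [Real.rpow_def_of_pos hk0, mul_div_cancel₀ _ hlk.ne', Real.exp_log hy]
    rw [Real.rpow_add hk0, Real.rpow_add hk0, e _ (by linarith), e _ hlN]
    ring
  let S : ℕ → Finset V := fun i => Finset.univ.filter fun x : V => G.dist v x = i
  let I : Finset (ℕ × ℕ) :=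
    (Finset.Icc 1 D ×ˢ Finset.Icc 1 D).filter fun q => q.1 + q.2 ≤ D
  have hsub : (Finset.univ.filter fun p : V × V =>
        p.1 ≠ v ∧ p.2 ≠ v ∧ G.dist p.1 v + G.dist v p.2 = G.dist p.1 p.2) ⊆
      I.biUnion fun q => S q.1 ×ˢ S q.2 := by
    rintro ⟨x, z⟩ hx
    simp only [Finset.mem_filter, Finset.mem_univ, true_and] at hx
    obtain ⟨hx, hz, h⟩ := hx
    have h1 := hG.pos_dist_of_ne hx.symm
    have h2 := hG.pos_dist_of_ne hz.symm
    have h3 := hD_le x z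
    rw [SimpleGraph.dist_comm (u := x) (v := v)] at h
    simp only [I, S, Finset.mem_biUnion, Finset.mem_filter, Finset.mem_product,
      Finset.mem_Icc, Finset.mem_univ, true_and]
    exact ⟨(G.dist v x, G.dist v z), by dsimp only; omega, rfl, rfl⟩
  have hI : (I.card : ℝ) ≤ (D : ℝ) ^ 2 := by
    have : I.card ≤ D * D := (Finset.card_filter_le _ _).trans (by simp)
    rw [pow_two]
    exact_mod_cast this
  calc _ ≤ ((I.biUnion fun q => S q.1 ×ˢ S q.2).card : ℝ) := by
        exact_mod_cast Finset.card_le_card hsub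
    _ ≤ ∑ q ∈ I, ((S q.1 ×ˢ S q.2).card : ℝ) := by exact_mod_cast Finset.card_biUnion_le
    _ ≤ ∑ q ∈ I, k ^ D := by
        refine Finset.sum_le_sum fun q hq => ?_
        have hq' : q.1 + q.2 ≤ D := (Finset.mem_filter.mp hq).2
        rw [Finset.card_product, Nat.cast_mul]
        calc _ ≤ k ^ q.1 * k ^ q.2 := mul_le_mul (sphere_card_le G hG k hk hdeg v _)
              (sphere_card_le G hG k hk hdeg v _) (Nat.cast_nonneg _) (by positivity)
          _ = k ^ (q.1 + q.2) := (pow_add _ _ _).symm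
          _ ≤ k ^ D := pow_le_pow_right₀ (by linarith) hq'
    _ = k ^ D * I.card := by rw [Finset.sum_const, nsmul_eq_mul, mul_comm]
    _ ≤ _ := mul_le_mul hkD hI (Nat.cast_nonneg _) (by positivity)
end
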